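/- Assume Assumptions RS and QM, that the kernel K is differentiable on ℝ^d, and let (y_t)_{t∈ℕ} be the mode estimate sequence obtained by the MS iteration starting from y₁ with f(y₁) > 0. Then there exists a constant b̄ > 0 such that ‖y_{t+1} − y_t‖ ≥ b̄·‖∇f(y_t)‖ for every t ∈ ℕ; in fact one can take b̄ = h^{d+2}/C₂ for any constant C₂ > 0 bounding Ǩ from above. -/

import Mathlib

open Set Filter Topology MeasureTheory
open scoped BigOperators RealInnerProductSpace

noncomputable section

/-- Euclidean space `ℝ^d`. -/
abbrev Euc (d : ℕ) := EuclideanSpace ℝ (Fin d)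

/-- The convex subdifferential of a function `g` (viewed as a function on `[0,∞)`) at `u`. -/
def subdiffIci (g : ℝ → ℝ) (u : ℝ) : Set ℝ :=
  {c : ℝ | ∀ v ∈ Set.Ici (0:ℝ), g v - g u ≥ c * (v - u)}

/-- Assumption RS: the kernel `K` is bounded, continuous, non-negative, normalized, and
radially symmetric with profile `Khat`. -/
structure AssumptionRS (d : ℕ) (K : Euc d → ℝ) (Khat : ℝ → ℝ) : Prop where
  bounded : ∃ M : ℝ, ∀ x, K x ≤ M
  cont : Continuous K
  nonneg : ∀ x, 0 ≤ K x
  normalized : ∫ x, K x = 1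
  radial : ∀ x, K x = Khat (‖x‖ ^ 2 / 2)

/-- Assumption QM for the profile `Khat`, together with the selection `Kcheck`:
`Khat` is convex and non-increasing on `[0,∞)`, its right derivative at `0` exists as a real
number and equals `-(Kcheck 0)` (i.e. `Kcheck 0 = -Khat'(0+) > -∞`), and for every `u > 0`,
`-(Kcheck u)` belongs to the subdifferential of `Khat` at `u`. -/
structure AssumptionQM (Khat Kcheck : ℝ → ℝ) : Prop where
  convexOn : ConvexOn ℝ (Set.Ici (0:ℝ)) Khat
  antitoneOn : AntitoneOn Khat (Set.Ici (0:ℝ))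
  rderiv0 : Filter.Tendsto (fun v => (Khat v - Khat 0) / v)
      (nhdsWithin 0 (Set.Ioi 0)) (nhds (-(Kcheck 0)))
  subdiff : ∀ u : ℝ, 0 < u → -(Kcheck u) ∈ subdiffIci Khat u

/-- The kernel density estimate `f(y) = (1/(n hᵈ)) ∑ᵢ K((y - xᵢ)/h)`. -/
def KDE (d n : ℕ) (K : Euc d → ℝ) (x : Fin n → Euc d) (h : ℝ) (y : Euc d) : ℝ :=
  (1 / ((n : ℝ) * h ^ d)) * ∑ i : Fin n, K (h⁻¹ • (y - x i))

/-- `f̌(y) = (1/(n hᵈ)) ∑ᵢ Ǩ(‖(y - xᵢ)/h‖²/2)`. -/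
def fcheck (d n : ℕ) (Kcheck : ℝ → ℝ) (x : Fin n → Euc d) (h : ℝ) (y : Euc d) : ℝ :=
  (1 / ((n : ℝ) * h ^ d)) * ∑ i : Fin n, Kcheck (‖h⁻¹ • (y - x i)‖ ^ 2 / 2)

/-- The mean shift vector `m(y)`: zero if `f̌(y) = 0`, and otherwise
`m(y) = ∑ᵢ Ǩ(‖(y - xᵢ)/h‖²/2)(xᵢ - y) / ∑ᵢ Ǩ(‖(y - xᵢ)/h‖²/2)`. -/
def msMap (d n : ℕ) (Kcheck : ℝ → ℝ) (x : Fin n → Euc d) (h : ℝ) (y : Euc d) : Euc d :=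
  if fcheck d n Kcheck x h y = 0 then 0
  else (∑ i : Fin n, Kcheck (‖h⁻¹ • (y - x i)‖ ^ 2 / 2))⁻¹ •
    ∑ i : Fin n, Kcheck (‖h⁻¹ • (y - x i)‖ ^ 2 / 2) • (x i - y)

/-- `y` is a mean shift iteration sequence: `y (t+1) = y t + m (y t)` for all `t`. -/
def MSSeq (d n : ℕ) (Kcheck : ℝ → ℝ) (x : Fin n → Euc d) (h : ℝ) (y : ℕ → Euc d) : Prop :=
  ∀ t : ℕ, y (t + 1) = y t + msMap d n Kcheck x h (y t)

/-- `f` has the Łojasiewicz property on the set `S`. -/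
def LojasiewiczOn (d : ℕ) (f : Euc d → ℝ) (S : Set (Euc d)) : Prop :=
  ∃ ε > (0:ℝ), ∃ c > (0:ℝ), ∃ θ ∈ Set.Ico (0:ℝ) 1,
    ∀ x' ∈ S, ∀ x ∈ S, ‖x' - x‖ < ε → 0 ≤ f x' - f x →
      ‖gradient f x‖ ≥ c * (f x' - f x) ^ θ

/-- `f` satisfies the Łojasiewicz inequality at `ybar` with exponent `θ`, on the set `S`. -/
def LojasiewiczAtWith (d : ℕ) (f : Euc d → ℝ) (S : Set (Euc d)) (ybar : Euc d) (θ : ℝ) : Prop :=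
  ∃ ε > (0:ℝ), ∃ c > (0:ℝ),
    ∀ y ∈ S, ‖ybar - y‖ < ε → 0 ≤ f ybar - f y →
      ‖gradient f y‖ ≥ c * (f ybar - f y) ^ θ

/-!
If `c` is a subgradient of the profile at `‖z‖² / 2`, then `w ↦ K w - (c / 2) ‖w‖²` is minimal at
`z`; when `K` is differentiable, this forces `∇K z = c z`, whichever subgradient was chosen. Since
the right derivative at `0` is a subgradient too, `∇K z = -Ǩ(‖z‖² / 2) z` for every `z`. Summing
over the data yields `∇f = h⁻² f̌ m`, so the step `m` dominates the gradient as soon as `f̌` is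
bounded, and `f̌ ≤ C₂ / h ^ d` whenever `Ǩ ≤ C₂`.
-/

section Subgradient

variable {g : ℝ → ℝ} {u v c c' : ℝ}

lemma le_of_mem_subdiffIci_of_lt (hu : 0 ≤ u) (huv : u < v)
    (hc : c ∈ subdiffIci g u) (hc' : c' ∈ subdiffIci g v) : c ≤ c' := by
  have h_right := hc v (hu.trans huv.le)
  have h_left := hc' u hu
  nlinarith

lemma nonpos_of_mem_subdiffIci (hg : AntitoneOn g (Ici 0)) (hu : 0 ≤ u)
    (hc : c ∈ subdiffIci g u) : c ≤ 0 := by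
  have h_mem : u + 1 ∈ Ici (0 : ℝ) := by simp only [mem_Ici]; linarith
  linarith [hc (u + 1) h_mem, hg hu h_mem (by linarith)]

lemma mem_subdiffIci_of_hasDerivWithinAt_Ioi (hg : ConvexOn ℝ (Ici 0) g) (hu : 0 ≤ u)
    (hc : HasDerivWithinAt g c (Ioi u) u) : c ∈ subdiffIci g u := by
  intro v hv
  rcases lt_trichotomy v u with hvu | rfl | huv
  · have h_slope : (g u - g v) / (u - v) ≤ c := by
      refine ge_of_tendsto ((hasDerivWithinAt_iff_tendsto_slope' self_notMem_Ioi).1 hc) ?_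
      filter_upwards [self_mem_nhdsWithin] with w (hw : u < w)
      rw [slope_def_field]
      exact hg.slope_mono_adjacent hv (hu.trans hw.le) hvu hw
    rw [div_le_iff₀ (sub_pos.2 hvu)] at h_slope
    linarith
  · simp only [sub_self, mul_zero, ge_iff_le, le_refl]
  · have h_slope := hg.le_slope_of_hasDerivWithinAt_Ioi hu hv huv hc
    rwa [slope_def_field, le_div_iff₀ (sub_pos.2 huv)] at h_slope

end Subgradient

namespace AssumptionQM

variable {Khat Kcheck : ℝ → ℝ} {u : ℝ}

lemma neg_mem_subdiffIci (hQM : AssumptionQM Khat Kcheck) (hu : 0 ≤ u) :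
    -Kcheck u ∈ subdiffIci Khat u := by
  rcases hu.eq_or_lt with rfl | hu
  · refine mem_subdiffIci_of_hasDerivWithinAt_Ioi hQM.convexOn le_rfl ?_
    rw [hasDerivWithinAt_iff_tendsto_slope' self_notMem_Ioi, slope_fun_def_field]
    simpa only [sub_zero] using hQM.rderiv0
  · exact hQM.subdiff u hu

lemma nonneg (hQM : AssumptionQM Khat Kcheck) (hu : 0 ≤ u) : 0 ≤ Kcheck u :=
  neg_nonpos.1 <| nonpos_of_mem_subdiffIci hQM.antitoneOn hu (hQM.neg_mem_subdiffIci hu)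

lemma antitoneOn_Kcheck (hQM : AssumptionQM Khat Kcheck) : AntitoneOn Kcheck (Ici 0) := by
  intro u hu v hv huv
  rcases huv.eq_or_lt with rfl | huv
  · exact le_rfl
  · exact neg_le_neg_iff.1 <| le_of_mem_subdiffIci_of_lt hu huv
      (hQM.neg_mem_subdiffIci hu) (hQM.neg_mem_subdiffIci hv)

end AssumptionQM

section Gradient

variable {E : Type*} [NormedAddCommGroup E] [InnerProductSpace ℝ E] [CompleteSpace E]

lemma hasGradientAt_of_radial_of_mem_subdiffIci {K : E → ℝ} {g : ℝ → ℝ} {c : ℝ} {z : E}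
    (hrad : ∀ w, K w = g (‖w‖ ^ 2 / 2)) (hK : DifferentiableAt ℝ K z)
    (hc : c ∈ subdiffIci g (‖z‖ ^ 2 / 2)) : HasGradientAt K (c • z) z := by
  have h_min : IsLocalMin (fun w => K w - c / 2 * ‖w‖ ^ 2) z := by
    refine Eventually.of_forall fun w => ?_
    have h_subgrad := hc (‖w‖ ^ 2 / 2) (by simp only [mem_Ici]; positivity)
    simp only [hrad]
    linarith
  have h_deriv := hK.hasFDerivAt.sub
    ((hasStrictFDerivAt_norm_sq z).hasFDerivAt.const_mul (c / 2))
  rw [hasGradientAt_iff_hasFDerivAt]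
  refine hK.hasFDerivAt.congr_fderiv ((sub_eq_zero.1 (h_min.hasFDerivAt_eq_zero h_deriv)).trans ?_)
  ext w
  simp only [smul_apply, innerSL_apply_apply, InnerProductSpace.toDual_apply_apply,
    inner_smul_left, smul_eq_mul, nsmul_eq_mul, RCLike.conj_to_real]
  push_cast
  ring

lemma hasGradientAt_comp_smul_sub {K : E → ℝ} {G a y : E} {r : ℝ}
    (hK : HasGradientAt K G (r • (y - a))) :
    HasGradientAt (fun w => K (r • (w - a))) (r • G) y := by
  rw [hasGradientAt_iff_hasFDerivAt] at hK ⊢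
  refine (hK.comp y (((hasFDerivAt_id y).sub_const a).const_smul r)).congr_fderiv ?_
  ext w
  simp

end Gradient

section MeanShift

variable {d n : ℕ} {K : Euc d → ℝ} {Khat Kcheck : ℝ → ℝ} {x : Fin n → Euc d} {h C : ℝ} {z : Euc d}

lemma hasGradientAt_KDE {G : Fin n → Euc d}
    (hG : ∀ i, HasGradientAt K (G i) (h⁻¹ • (z - x i))) :
    HasGradientAt (KDE d n K x h) ((1 / ((n : ℝ) * h ^ d)) • ∑ i, h⁻¹ • G i) z := by
  rw [hasGradientAt_iff_hasFDerivAt, map_smul, map_sum]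
  exact (HasFDerivAt.fun_sum fun i _ =>
    (hasGradientAt_comp_smul_sub (hG i)).hasFDerivAt).const_mul _

lemma fcheck_smul_msMap (hKcheck : ∀ u, 0 ≤ u → 0 ≤ Kcheck u) :
    fcheck d n Kcheck x h z • msMap d n Kcheck x h z =
      (1 / ((n : ℝ) * h ^ d)) •
        ∑ i, Kcheck (‖h⁻¹ • (z - x i)‖ ^ 2 / 2) • (x i - z) := by
  unfold msMap
  split_ifs with h_zero
  · rw [smul_zero]
    rcases mul_eq_zero.1 h_zero with h_const | h_sum
    · rw [h_const, zero_smul]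
    · have h_weight := (Finset.sum_eq_zero_iff_of_nonneg fun i _ =>
        hKcheck _ (by positivity)).1 h_sum
      rw [Finset.sum_eq_zero fun i hi => by rw [h_weight i hi, zero_smul], smul_zero]
  · have h_sum := right_ne_zero_of_mul h_zero
    rw [smul_smul, fcheck, mul_inv_cancel_right₀ h_sum]

lemma gradient_KDE_eq_smul_msMap (hrad : ∀ w, K w = Khat (‖w‖ ^ 2 / 2))
    (hQM : AssumptionQM Khat Kcheck) (hK : Differentiable ℝ K) :
    gradient (KDE d n K x h) z =
      (h⁻¹ ^ 2 * fcheck d n Kcheck x h z) • msMap d n Kcheck x h z := by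
  have h_kernel : ∀ w, HasGradientAt K (-Kcheck (‖w‖ ^ 2 / 2) • w) w := fun w =>
    hasGradientAt_of_radial_of_mem_subdiffIci hrad (hK w)
      (hQM.neg_mem_subdiffIci (by positivity))
  rw [(hasGradientAt_KDE fun i => h_kernel (h⁻¹ • (z - x i))).gradient, mul_smul,
    fcheck_smul_msMap fun u hu => hQM.nonneg hu, smul_comm,
    Finset.smul_sum (r := h⁻¹ ^ 2)]
  refine congrArg _ (Finset.sum_congr rfl fun i _ => ?_)
  module

lemma fcheck_le (hn : 0 < n) (hh : 0 < h) (hC : ∀ u, 0 ≤ u → Kcheck u ≤ C) :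
    fcheck d n Kcheck x h z ≤ C / h ^ d := by
  calc fcheck d n Kcheck x h z
      ≤ 1 / (n * h ^ d) * ∑ _i : Fin n, C := by
        unfold fcheck
        gcongr
        exact hC _ (by positivity)
    _ = C / h ^ d := by
        rw [Finset.sum_const, Finset.card_univ, Fintype.card_fin, nsmul_eq_mul]
        field_simp

lemma norm_gradient_KDE_le (hn : 0 < n) (hrad : ∀ w, K w = Khat (‖w‖ ^ 2 / 2))
    (hQM : AssumptionQM Khat Kcheck) (hh : 0 < h) (hK : Differentiable ℝ K)
    (hC : ∀ u, 0 ≤ u → Kcheck u ≤ C) :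
    ‖gradient (KDE d n K x h) z‖ ≤ C / h ^ (d + 2) * ‖msMap d n Kcheck x h z‖ := by
  have h_fcheck : 0 ≤ fcheck d n Kcheck x h z :=
    mul_nonneg (by positivity) (Finset.sum_nonneg fun i _ => hQM.nonneg (by positivity))
  calc ‖gradient (KDE d n K x h) z‖
      = h⁻¹ ^ 2 * fcheck d n Kcheck x h z * ‖msMap d n Kcheck x h z‖ := by
        rw [gradient_KDE_eq_smul_msMap hrad hQM hK, norm_smul, Real.norm_of_nonneg (by positivity)]
    _ ≤ h⁻¹ ^ 2 * (C / h ^ d) * ‖msMap d n Kcheck x h z‖ := by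
        gcongr
        exact fcheck_le hn hh hC
    _ = C / h ^ (d + 2) * ‖msMap d n Kcheck x h z‖ := by
        rw [pow_add]
        field_simp

theorem ms_step_bounds_gradient_general (hn : 0 < n) (hrad : ∀ w, K w = Khat (‖w‖ ^ 2 / 2))
    (hQM : AssumptionQM Khat Kcheck) (hh : 0 < h) (hK : Differentiable ℝ K)
    {y : ℕ → Euc d} (hy : MSSeq d n Kcheck x h y) :
    (∃ bbar : ℝ, 0 < bbar ∧ ∀ t : ℕ,
        bbar * ‖gradient (KDE d n K x h) (y t)‖ ≤ ‖y (t + 1) - y t‖) ∧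
    ∀ C₂ : ℝ, 0 < C₂ → (∀ u : ℝ, 0 ≤ u → Kcheck u ≤ C₂) →
      ∀ t : ℕ,
        h ^ (d + 2) / C₂ * ‖gradient (KDE d n K x h) (y t)‖ ≤ ‖y (t + 1) - y t‖ := by
  have h_bound : ∀ C₂ : ℝ, 0 < C₂ → (∀ u : ℝ, 0 ≤ u → Kcheck u ≤ C₂) → ∀ t : ℕ,
      h ^ (d + 2) / C₂ * ‖gradient (KDE d n K x h) (y t)‖ ≤ ‖y (t + 1) - y t‖ := by
    intro C₂ hC₂_pos hC₂ t
    rw [hy t, add_sub_cancel_left, ← inv_div, inv_mul_le_iff₀ (by positivity)]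
    exact norm_gradient_KDE_le hn hrad hQM hh hK hC₂
  have h_zero : 0 ≤ Kcheck 0 := hQM.nonneg le_rfl
  refine ⟨⟨h ^ (d + 2) / (Kcheck 0 + 1), by positivity, ?_⟩, h_bound⟩
  refine h_bound _ (by positivity) fun u hu => ?_
  linarith [hQM.antitoneOn_Kcheck self_mem_Ici hu hu]

end MeanShift

/-- Under Assumptions RS and QM with `K` differentiable, starting from `y 0` with
`f (y 0) > 0`, there exists `b̄ > 0` such that `‖y_{t+1} − y_t‖ ≥ b̄‖∇f(y_t)‖` for every `t`;
in fact one can take `b̄ = h^{d+2}/C₂` for any constant `C₂ > 0` bounding `Ǩ` from above. -/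
theorem ms_step_bounds_gradient
    (d n : ℕ) (hd : 0 < d) (hn : 0 < n)
    (K : Euc d → ℝ) (Khat Kcheck : ℝ → ℝ)
    (hRS : AssumptionRS d K Khat) (hQM : AssumptionQM Khat Kcheck)
    (x : Fin n → Euc d) (h : ℝ) (hh : 0 < h)
    (hK : Differentiable ℝ K)
    (y : ℕ → Euc d) (hy : MSSeq d n Kcheck x h y)
    (hy0 : 0 < KDE d n K x h (y 0)) :
    (∃ bbar : ℝ, 0 < bbar ∧ ∀ t : ℕ,
        bbar * ‖gradient (KDE d n K x h) (y t)‖ ≤ ‖y (t + 1) - y t‖) ∧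
    ∀ C₂ : ℝ, 0 < C₂ → (∀ u : ℝ, 0 ≤ u → Kcheck u ≤ C₂) →
      ∀ t : ℕ,
        h ^ (d + 2) / C₂ * ‖gradient (KDE d n K x h) (y t)‖ ≤ ‖y (t + 1) - y t‖ :=
  ms_step_bounds_gradient_general hn hRS.radial hQM hh hK hy
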